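/- Let f ∈ C_{≤d} be such that Δ_C(f) lies in the K-submodule C_{≤d} ⊗ C_{≤d−1} + C_{≤d−1} ⊗ C_{≤d} + [det−1] ⊗ C + C ⊗ [det−1] of C ⊗_K C. Then f ∈ C_{≤d−1} + [det−1]. -/

import Mathlib

open MvPolynomial

/-- Variables of the differential polynomial ring `C = K{c₁₁, c₁₂, c₂₁, c₂₂}`:
the variable `((i, j), n)` represents `c_{ij}^{(n)}`, the `n`-th derivative of `c_{ij}`. -/
abbrev DVar : Type := (Fin 2 × Fin 2) × ℕ

/-- The differential polynomial ring `C = K{c₁₁, c₁₂, c₂₁, c₂₂}`. -/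
abbrev DiffPolyC (K : Type) [CommRing K] : Type := MvPolynomial DVar K

/-- `det = c₁₁·c₂₂ − c₁₂·c₂₁`. -/
noncomputable def detC (K : Type) [CommRing K] : DiffPolyC K :=
  X ((0, 0), 0) * X ((1, 1), 0) - X ((0, 1), 0) * X ((1, 0), 0)

/-- `D : C → C` is the unique derivation extending the derivation `δ` of `K` and shifting
variables, i.e. `D(c_{ij}^{(n)}) = c_{ij}^{(n+1)}`. -/
def IsDiffStructure {K : Type} [CommRing K] (δ : K → K) (D : DiffPolyC K → DiffPolyC K) : Prop :=
  (∀ a b : K, δ (a + b) = δ a + δ b) ∧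
  (∀ a b : K, δ (a * b) = δ a * b + a * δ b) ∧
  (∀ f g : DiffPolyC K, D (f + g) = D f + D g) ∧
  (∀ f g : DiffPolyC K, D (f * g) = D f * g + f * D g) ∧
  (∀ a : K, D (C a) = C (δ a)) ∧
  (∀ v : DVar, D (X v) = X (v.1, v.2 + 1))

open TensorProduct in
/-- The comultiplication `Δ_C : C → C ⊗_K C`: the unique `K`-algebra homomorphism with
`Δ_C(c_{ij}^{(n)}) = Σ_{k} Σ_{m ≤ n} (n choose m) · c_{ik}^{(m)} ⊗ c_{kj}^{(n−m)}`. -/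
noncomputable def deltaC (K : Type) [CommRing K] :
    DiffPolyC K →ₐ[K] (DiffPolyC K ⊗[K] DiffPolyC K) :=
  aeval fun v : DVar =>
    ∑ k : Fin 2, ∑ m ∈ Finset.range (v.2 + 1),
      (v.2.choose m) •
        ((X ((v.1.1, k), m) : DiffPolyC K) ⊗ₜ[K] (X ((k, v.1.2), v.2 - m) : DiffPolyC K))

open TensorProduct in
/-- The `K`-submodule `p ⊗ q` of `C ⊗_K C` (the span of the pure tensors `a ⊗ b`,
`a ∈ p`, `b ∈ q`). -/
noncomputable def tensorSub {K : Type} [CommRing K] (p q : Submodule K (DiffPolyC K)) :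
    Submodule K (DiffPolyC K ⊗[K] DiffPolyC K) :=
  Submodule.span K {z | ∃ a ∈ p, ∃ b ∈ q, z = a ⊗ₜ[K] b}
section generic
variable {K : Type} [Field K] {σ : Type} (p q : ℕ → σ) (E : ℕ → MvPolynomial σ K)

noncomputable def alF (m : σ →₀ ℕ) : ℕ →₀ ℕ :=
  open Classical in
  if h : Function.Injective p ∧ Function.Injective q then
  Finsupp.zipWith min rfl (m.comapDomain p h.1.injOn) (m.comapDomain q h.2.injOn) else 0

theorem alF_apply (hp : Function.Injective p) (hq : Function.Injective q) (m : σ →₀ ℕ) (n : ℕ) :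
    alF p q m n = min (m (p n)) (m (q n)) := by
  simp [alF, hp, hq]

noncomputable def ldF (a : ℕ →₀ ℕ) : σ →₀ ℕ := a.mapDomain p + a.mapDomain q

theorem ldF_le (hp : Function.Injective p) (hq : Function.Injective q)
    (hpq : ∀ i j, p i ≠ q j) (m : σ →₀ ℕ) : ldF p q (alF p q m) ≤ m := by
  intro v
  simp only [ldF, Finsupp.add_apply]
  by_cases h1 : v ∈ Set.range p
  · obtain ⟨n, rfl⟩ := h1
    rw [Finsupp.mapDomain_apply hp, Finsupp.mapDomain_of_notMem_range (f := q), alF_apply p q hp hq]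
    · simp
    · rintro ⟨j, hj⟩; exact hpq _ _ hj.symm
  · rw [Finsupp.mapDomain_of_notMem_range _ _ h1]
    by_cases h2 : v ∈ Set.range q
    · obtain ⟨n, rfl⟩ := h2
      rw [Finsupp.mapDomain_apply hq, alF_apply p q hp hq]
      simp
    · rw [Finsupp.mapDomain_of_notMem_range _ _ h2]; simp

noncomputable def psM (m : σ →₀ ℕ) : MvPolynomial σ K :=
  (alF p q m).prod (fun n k => E n ^ k) * monomial (m - ldF p q (alF p q m)) 1

noncomputable def psi : MvPolynomial σ K →ₗ[K] MvPolynomial σ K :=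
  (basisMonomials σ K).constr K (psM p q E)

theorem psi_monomial (m : σ →₀ ℕ) : psi p q E (monomial m 1) = psM p q E m := by
  have := (basisMonomials σ K).constr_basis K (psM p q E) m
  rwa [coe_basisMonomials] at this

theorem psi_X (hp : Function.Injective p) (hq : Function.Injective q)
    (hpq : ∀ i j, p i ≠ q j) (z : σ) (hzp : ∀ n, p n ≠ z) (hzq : ∀ n, q n ≠ z)
    (f : MvPolynomial σ K) : psi p q E (X z * f) = X z * psi p q E f := by
  suffices h : psi p q E ∘ₗ LinearMap.mulLeft K (X z) = LinearMap.mulLeft K (X z) ∘ₗ psi p q E from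
    LinearMap.congr_fun h f
  refine (basisMonomials σ K).ext fun m => ?_
  simp only [coe_basisMonomials, LinearMap.comp_apply, LinearMap.mulLeft_apply, X, monomial_mul,
    one_mul, psi_monomial, psM]
  have h1 : alF p q (Finsupp.single z 1 + m) = alF p q m := by
    ext n
    simp [alF_apply p q hp hq, (hzp n).symm, (hzq n).symm]
  rw [h1, mul_left_comm, monomial_mul, one_mul, add_tsub_assoc_of_le (ldF_le p q hp hq hpq m)]

theorem psi_L (hp : Function.Injective p) (hq : Function.Injective q)
    (hpq : ∀ i j, p i ≠ q j) (n : ℕ)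
    (f : MvPolynomial σ K) : psi p q E (monomial (Finsupp.single (p n) 1 + Finsupp.single (q n) 1) 1 * f)
      = E n * psi p q E f := by
  classical
  suffices h : psi p q E ∘ₗ LinearMap.mulLeft K (monomial (Finsupp.single (p n) 1 + Finsupp.single (q n) 1) 1)
      = LinearMap.mulLeft K (E n) ∘ₗ psi p q E from
    LinearMap.congr_fun h f
  refine (basisMonomials σ K).ext fun m => ?_
  simp only [coe_basisMonomials, LinearMap.comp_apply, LinearMap.mulLeft_apply, monomial_mul,
    one_mul, psi_monomial, psM]
  have h1 : alF p q (Finsupp.single (p n) 1 + Finsupp.single (q n) 1 + m) =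
      Finsupp.single n 1 + alF p q m := by
    ext k
    simp only [alF_apply p q hp hq, Finsupp.add_apply, Finsupp.single_apply, hp.eq_iff, hq.eq_iff, hpq,
      (fun i j => (hpq i j).symm : ∀ i j, q j ≠ p i), if_false]
    split_ifs <;> omega
  have h2 : ldF p q (Finsupp.single n 1 + alF p q m) = 
      (Finsupp.single (p n) 1 + Finsupp.single (q n) 1) + ldF p q (alF p q m) := by
    simp only [ldF, Finsupp.mapDomain_add, Finsupp.mapDomain_single]
    abel
  rw [h1, h2, add_tsub_add_eq_tsub_left, Finsupp.prod_add_index', Finsupp.prod_single_index, pow_one, mul_assoc]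
  · simp
  · simp
  · intros; rw [pow_add]

variable {β : Type} [AddCommMonoid β] (B : (σ →₀ ℕ) →+ β) (Q : (σ →₀ ℕ) →+ ℕ)

noncomputable def VS (K : Type) [Field K] (b : β) (w : ℕ) : Submodule K (MvPolynomial σ K) :=
  restrictSupport K {m | B m = b ∧ w ≤ Q m}

theorem VS_mul {b b' : β} {w w' : ℕ} {f g : MvPolynomial σ K} (hf : f ∈ VS B Q K b w)
    (hg : g ∈ VS B Q K b' w') : f * g ∈ VS B Q K (b + b') (w + w') := by
  have h : f * g ∈ VS B Q K b w * VS B Q K b' w' := Submodule.mul_mem_mul hf hg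
  unfold VS at h
  rw [← restrictSupport_add] at h
  refine restrictSupport_mono K ?_ h
  rintro _ ⟨x, ⟨hx1, hx2⟩, y, ⟨hy1, hy2⟩, rfl⟩
  exact ⟨by simp [hx1, hy1], by simp; omega⟩

theorem VS_mono {b : β} {w w' : ℕ} (h : w ≤ w') : VS B Q K b w' ≤ VS B Q K b w :=
  restrictSupport_mono K fun _ hx => ⟨hx.1, h.trans hx.2⟩

def GoodP (m : σ →₀ ℕ) (f : MvPolynomial σ K) : Prop := f - monomial m 1 ∈ VS B Q K (B m) (Q m + 1)

theorem mono_VS (m : σ →₀ ℕ) : monomial m (1 : K) ∈ VS B Q K (B m) (Q m) := by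
  simp [VS]

variable {B Q} in
theorem GoodP.mul {m m' : σ →₀ ℕ} {f g : MvPolynomial σ K} (hf : GoodP B Q m f) (hg : GoodP B Q m' g) :
    GoodP B Q (m + m') (f * g) := by
  unfold GoodP at *
  have hg' : g ∈ VS B Q K (B m') (Q m') := by
    have := add_mem (VS_mono B Q (Nat.le_succ _) hg) (mono_VS B Q m')
    simpa using this
  have e : f * g - monomial (m + m') 1 = (f - monomial m 1) * g + monomial m 1 * (g - monomial m' 1) := by
    have : (monomial (m + m') 1 : MvPolynomial σ K) = monomial m 1 * monomial m' 1 := by simp [monomial_mul]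
    rw [this]; ring
  rw [e, map_add, map_add]
  refine add_mem ?_ ?_
  · have := VS_mul B Q hf hg'
    rwa [show Q m + 1 + Q m' = Q m + Q m' + 1 by ring] at this
  · have := VS_mul B Q (mono_VS B Q m) hg
    rwa [← add_assoc] at this

theorem GoodP_self (m : σ →₀ ℕ) : GoodP B Q m (monomial m (1 : K)) := by
  simp [GoodP]

theorem GoodP_pow {m : σ →₀ ℕ} {f : MvPolynomial σ K} (hf : GoodP B Q m f) (k : ℕ) :
    GoodP B Q (k • m) (f ^ k) := by
  induction k with
  | zero => simpa using GoodP_self (K := K) B Q (0 : σ →₀ ℕ)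
  | succ k ih => rw [succ_nsmul, pow_succ]; exact ih.mul hf

theorem GoodP_prod (hE : ∀ n, GoodP B Q (Finsupp.single (p n) 1 + Finsupp.single (q n) 1) (E n))
    (a : ℕ →₀ ℕ) : GoodP B Q (ldF p q a) (a.prod (fun n k => E n ^ k)) := by
  induction a using Finsupp.induction_linear with
  | zero => simpa [ldF] using GoodP_self (K := K) B Q (0 : σ →₀ ℕ)
  | add f g hf hg =>
    rw [Finsupp.prod_add_index']
    · have : ldF p q (f + g) = ldF p q f + ldF p q g := by
        simp only [ldF, Finsupp.mapDomain_add]; abel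
      rw [this]
      exact hf.mul hg
    · simp
    · intros; rw [pow_add]
  | single n k =>
    rw [Finsupp.prod_single_index (by simp)]
    have := GoodP_pow B Q (hE n) k
    simpa [ldF, Finsupp.mapDomain_single] using this

theorem GoodP_psM (hp : Function.Injective p) (hq : Function.Injective q)
    (hpq : ∀ i j, p i ≠ q j)
    (hE : ∀ n, GoodP B Q (Finsupp.single (p n) 1 + Finsupp.single (q n) 1) (E n))
    (m : σ →₀ ℕ) : GoodP B Q m (psM p q E m) := by
  have := (GoodP_prod p q E B Q hE (alF p q m)).mul (GoodP_self B Q (m - ldF p q (alF p q m)))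
  rwa [add_tsub_cancel_of_le (ldF_le p q hp hq hpq m)] at this

theorem bij_of_locnil {M : Type} [AddCommGroup M] [Module K M] (N : M →ₗ[K] M)
    (h : ∀ x, ∃ k, (N ^ k) x = 0) : Function.Bijective (fun x => x + N x) := by
  constructor
  · intro x y hxy
    have hz : (x - y) = - N (x - y) := by
      simp only at hxy
      rw [map_sub]
      have : x + N x - (y + N y) = 0 := by rw [hxy, sub_self]
      rw [← sub_eq_zero, ← this]; abel
    have hk : ∀ k, (x - y) = (-1 : K) ^ k • (N ^ k) (x - y) := by
      intro k
      induction k with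
      | zero => simp
      | succ k ih =>
        conv_lhs => rw [ih]
        conv_lhs => rw [hz]
        rw [pow_succ N, Module.End.mul_apply, map_neg, pow_succ, mul_smul, neg_one_smul]
    obtain ⟨k, hk'⟩ := h (x - y)
    have := hk k
    rw [hk', smul_zero] at this
    exact sub_eq_zero.mp this
  · have : ∀ k, ∀ x, (N ^ k) x = 0 → ∃ y, y + N y = x := by
      intro k
      induction k with
      | zero => intro x hx; exact ⟨0, by simpa using hx.symm⟩
      | succ k ih =>
        intro x hx
        rw [pow_succ, Module.End.mul_apply] at hx
        obtain ⟨y, hy⟩ := ih _ hx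
        refine ⟨x - y, ?_⟩
        rw [map_sub, ← hy]; abel
    intro x
    obtain ⟨k, hk⟩ := h x
    exact this k x hk

theorem psi_bij (hp : Function.Injective p) (hq : Function.Injective q)
    (hpq : ∀ i j, p i ≠ q j)
    (hE : ∀ n, GoodP B Q (Finsupp.single (p n) 1 + Finsupp.single (q n) 1) (E n))
    (bd : β → ℕ) (hbd : ∀ m, Q m ≤ bd (B m)) : Function.Bijective (psi p q E) := by
  have key : Function.Bijective (fun x => x + (psi p q E - (LinearMap.id : MvPolynomial σ K →ₗ[K] MvPolynomial σ K)) x) := by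
    apply bij_of_locnil
    set N := psi p q E - (LinearMap.id : MvPolynomial σ K →ₗ[K] MvPolynomial σ K) with hN
    have h1 : ∀ b w, VS B Q K b w ≤ (VS B Q K b (w + 1)).comap N := by
      intro b w
      conv_lhs => rw [VS, restrictSupport_eq_span]
      rw [Submodule.span_le]
      rintro _ ⟨m, ⟨hm, hw⟩, rfl⟩
      have := GoodP_psM p q E B Q hp hq hpq hE m
      simp only [SetLike.mem_coe, Submodule.mem_comap, hN, LinearMap.sub_apply, psi_monomial, LinearMap.id_apply]
      rw [← hm]
      exact VS_mono B Q (by omega) this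
    have h2 : ∀ k b w f, f ∈ VS B Q K b w → (N ^ k) f ∈ VS B Q K b (w + k) := by
      intro k
      induction k with
      | zero => intro b w f hf; simpa using hf
      | succ k ih =>
        intro b w f hf
        rw [pow_succ', Module.End.mul_apply]
        exact h1 _ _ (ih _ _ _ hf)
    intro f
    induction f using MvPolynomial.induction_on' with
    | monomial m a =>
      refine ⟨bd (B m) + 1, ?_⟩
      have h3 : (monomial m a : MvPolynomial σ K) ∈ VS B Q K (B m) 0 := by
        simp [VS]
      have h4 := h2 (bd (B m) + 1) _ _ _ h3
      by_contra hne
      obtain ⟨m', hm⟩ := support_nonempty.mpr hne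
      have := h4 hm
      have h5 := hbd m'
      rw [this.1] at h5
      have := this.2
      omega
    | add f g ih1 ih2 =>
      obtain ⟨k, hk⟩ := ih1
      obtain ⟨l, hl⟩ := ih2
      refine ⟨k + l, ?_⟩
      rw [map_add]
      nth_rw 2 [pow_add]
      rw [add_comm k l, pow_add, Module.End.mul_apply, Module.End.mul_apply, hl, hk]
      simp
  convert key using 2
  simp

theorem regular_gen (hp : Function.Injective p) (hq : Function.Injective q)
    (hpq : ∀ i j, p i ≠ q j)
    (hE : ∀ n, GoodP B Q (Finsupp.single (p n) 1 + Finsupp.single (q n) 1) (E n))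
    (bd : β → ℕ) (hbd : ∀ m, Q m ≤ bd (B m))
    (z : σ) (hzp : ∀ n, p n ≠ z) (hzq : ∀ n, q n ≠ z) (f : MvPolynomial σ K)
    (hf : X z * f ∈ Ideal.span (Set.range E)) : f ∈ Ideal.span (Set.range E) := by
  classical
  obtain ⟨hinj, hsurj⟩ := psi_bij p q E B Q hp hq hpq hE bd hbd
  set L : ℕ → (σ →₀ ℕ) := fun n => Finsupp.single (p n) 1 + Finsupp.single (q n) 1 with hL
  have hrange : Set.range (fun n => monomial (L n) (1 : K)) = (fun s => monomial s (1 : K)) '' Set.range L := by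
    rw [← Set.range_comp]; rfl
  obtain ⟨g, rfl⟩ := hsurj f
  obtain ⟨c, hc⟩ := Finsupp.mem_ideal_span_range_iff_exists_finsupp.mp hf
  choose c' hc' using fun n => hsurj (c n)
  have h1 : psi p q E (X z * g) = psi p q E (∑ n ∈ c.support, monomial (L n) 1 * c' n) := by
    rw [psi_X p q E hp hq hpq z hzp hzq, ← hc, map_sum, Finsupp.sum]
    refine Finset.sum_congr rfl fun n _ => ?_
    rw [hL, psi_L p q E hp hq hpq, hc', mul_comm]
  have h2 : X z * g ∈ Ideal.span ((fun s => monomial s (1 : K)) '' Set.range L) := by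
    rw [hinj h1]
    refine Ideal.sum_mem _ fun n _ => Ideal.mul_mem_right _ _ (Ideal.subset_span ⟨_, ⟨n, rfl⟩, rfl⟩)
  have h3 : g ∈ Ideal.span ((fun s => monomial s (1 : K)) '' Set.range L) := by
    rw [mem_ideal_span_monomial_image] at h2 ⊢
    intro m hm
    obtain ⟨_, ⟨n, rfl⟩, hn⟩ := h2 (Finsupp.single z 1 + m) (by
      rw [mem_support_iff, coeff_X_mul]; exact mem_support_iff.mp hm)
    refine ⟨_, ⟨n, rfl⟩, fun v => ?_⟩
    have := hn v
    by_cases hv : v = z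
    · subst hv
      simp [hL, hzp, hzq]
    · simpa [Finsupp.single_apply, Ne.symm hv] using this
  rw [← hrange] at h3
  obtain ⟨e, he⟩ := Finsupp.mem_ideal_span_range_iff_exists_finsupp.mp h3
  rw [← he, Finsupp.sum, map_sum]
  refine Ideal.sum_mem _ fun n _ => ?_
  rw [mul_comm, hL, psi_L p q E hp hq hpq]
  exact Ideal.mul_mem_right _ _ (Ideal.subset_span ⟨n, rfl⟩)

end generic
section part2
variable (K : Type) [Field K]

noncomputable def detN (n : ℕ) : DiffPolyC K :=
  ∑ ij ∈ Finset.HasAntidiagonal.antidiagonal n, (n.choose ij.1) •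
    (X ((0, 0), ij.1) * X ((1, 1), ij.2) - X ((0, 1), ij.1) * X ((1, 0), ij.2))

def pV (n : ℕ) : DVar := if n % 2 = 0 then ((0, 0), n / 2) else ((0, 1), n / 2 + 1)
def qV (n : ℕ) : DVar := if n % 2 = 0 then ((1, 1), n / 2) else ((1, 0), n / 2)

theorem pV_inj : Function.Injective pV := by
  intro m n h
  unfold pV at h
  split_ifs at h <;> simp at h <;> omega

theorem qV_inj : Function.Injective qV := by
  intro m n h
  unfold qV at h
  split_ifs at h <;> simp at h <;> omega

theorem pV_ne_qV (m n : ℕ) : pV m ≠ qV n := by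
  intro h
  unfold pV qV at h
  split_ifs at h <;> simp at h

def qwt (v : DVar) : ℕ :=
  if v.1 = (0, 1) then 2 * (v.2 * (v.2 - 1)) + 1 else if v.1 = (1, 0) then 2 * (v.2 * (v.2 + 1))
  else 2 * (v.2 * v.2)

noncomputable def QW : (DVar →₀ ℕ) →+ ℕ := Finsupp.weight qwt
noncomputable def BW : (DVar →₀ ℕ) →+ ℕ × ℕ := (Finsupp.weight fun _ => 1).prod (Finsupp.weight fun v => v.2)

theorem QW_bd (m : DVar →₀ ℕ) : QW m ≤ (BW m).1 * (2 * ((BW m).2 * ((BW m).2 + 1)) + 1) := by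
  simp only [QW, BW, AddMonoidHom.prod_apply]
  rw [Finsupp.weight_apply (w := qwt), Finsupp.weight_apply (w := fun _ => 1), Finsupp.sum, Finsupp.sum, Finset.sum_mul]
  refine Finset.sum_le_sum fun v hv => ?_
  have h := Finsupp.le_weight_of_ne_zero' (fun v : DVar => v.2) (Finsupp.mem_support_iff.mp hv)
  simp only [smul_eq_mul, mul_one] at *
  refine Nat.mul_le_mul_left _ ?_
  have h1 : v.2 * v.2 ≤ v.2 * (v.2 + 1) := Nat.mul_le_mul_left _ (by omega)
  have h2 : v.2 * (v.2 - 1) ≤ v.2 * (v.2 + 1) := Nat.mul_le_mul_left _ (by omega)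
  have h3 : v.2 * (v.2 + 1) ≤ (Finsupp.weight (fun v : DVar => v.2) m) * (Finsupp.weight (fun v : DVar => v.2) m + 1) :=
    Nat.mul_le_mul h (by omega)
  unfold qwt
  split_ifs <;> omega

theorem QW_two (v w : DVar) : QW (Finsupp.single v 1 + Finsupp.single w 1) = qwt v + qwt w := by
  simp [QW, Finsupp.weight_single]

theorem BW_two (v w : DVar) : BW (Finsupp.single v 1 + Finsupp.single w 1) = (2, v.2 + w.2) := by
  simp [BW, Finsupp.weight_single]

theorem XX_VS {v w : DVar} {b : ℕ × ℕ} {c : ℕ} (h1 : (2, v.2 + w.2) = b) (h2 : c ≤ qwt v + qwt w) :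
    (X v * X w : DiffPolyC K) ∈ VS BW QW K b c := by
  have : (X v * X w : DiffPolyC K) = monomial (Finsupp.single v 1 + Finsupp.single w 1) 1 := by
    simp [X, monomial_mul]
  rw [this, VS, monomial_mem_restrictSupport]
  left
  exact ⟨by rw [BW_two, h1], by rw [QW_two]; exact h2⟩

noncomputable def lcN (n : ℕ) : K :=
  if n % 2 = 0 then (n.choose (n / 2) : K) else - (n.choose (n / 2 + 1) : K)

theorem lcN_ne [CharZero K] (n : ℕ) : lcN K n ≠ 0 := by
  unfold lcN
  split_ifs
  · exact_mod_cast (Nat.choose_pos (by omega)).ne'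
  · rw [neg_ne_zero]
    exact_mod_cast (Nat.choose_pos (by omega)).ne'

theorem VS_nsmul {b : ℕ × ℕ} {c : ℕ} {f : DiffPolyC K} (k : ℕ) (h : f ∈ VS BW QW K b c) :
    k • f ∈ VS BW QW K b c := nsmul_mem h k

theorem detN_split (n : ℕ) : detN K n =
   ∑ ij ∈ Finset.HasAntidiagonal.antidiagonal n, (n.choose ij.1) • (X ((0, 0), ij.1) * X ((1, 1), ij.2) : DiffPolyC K) -
   ∑ ij ∈ Finset.HasAntidiagonal.antidiagonal n, (n.choose ij.1) • (X ((0, 1), ij.1) * X ((1, 0), ij.2) : DiffPolyC K) := by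
  rw [detN, ← Finset.sum_sub_distrib]
  simp only [smul_sub]

theorem detN_sub (n : ℕ) : detN K n - lcN K n • (X (pV n) * X (qV n)) ∈
    VS BW QW K (2, n) (qwt (pV n) + qwt (qV n) + 1) := by
  obtain ⟨k, rfl | rfl⟩ := Nat.even_or_odd' n
  · have e1 : pV (2 * k) = ((0, 0), k) := by simp [pV]
    have e2 : qV (2 * k) = ((1, 1), k) := by simp [qV]
    have e3 : lcN K (2 * k) = ((2 * k).choose k : K) := by simp [lcN]
    have hmem : (k, k) ∈ Finset.HasAntidiagonal.antidiagonal (2 * k) := by simp; omega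
    rw [detN_split, e1, e2, e3, ← Finset.add_sum_erase _ _ hmem, Nat.cast_smul_eq_nsmul]
    have : ∀ a b c : DiffPolyC K, a + b - c - a = b - c := by intros; ring
    rw [this]
    refine sub_mem (sum_mem fun ij hij => VS_nsmul K _ (XX_VS K ?_ ?_)) (sum_mem fun ij hij => VS_nsmul K _ (XX_VS K ?_ ?_))
    · simp at hij; simp [hij.2]
    · obtain ⟨i, j⟩ := ij
      simp only [Finset.mem_erase, Finset.HasAntidiagonal.mem_antidiagonal, ne_eq, Prod.mk.injEq] at hij
      obtain ⟨h1, h2⟩ := hij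
      simp only [qwt, Prod.mk.injEq, zero_ne_one, one_ne_zero, and_false, false_and, if_false]
      have h3 : i ≠ j := by omega
      zify at *
      have h5 : (k : ℤ) * 2 = i + j := by linarith
      rcases lt_or_gt_of_ne h3 with h4 | h4 <;> nlinarith
    · simp at hij; simp [hij]
    · obtain ⟨i, j⟩ := ij
      simp only [Finset.HasAntidiagonal.mem_antidiagonal] at hij
      simp only [qwt, Prod.mk.injEq, zero_ne_one, one_ne_zero, and_false, false_and, if_false, and_self, if_true]
      rcases i with _ | i
      · simp only [zero_add, zero_mul, mul_zero] at *
        subst hij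
        nlinarith
      · simp only [Nat.add_sub_cancel]
        zify at *
        have h5 : (k : ℤ) * 2 = i + 1 + j := by linarith
        have h6 : (i : ℤ) ≠ j := by intro h; omega
        rcases lt_or_gt_of_ne h6 with h4 | h4 <;> nlinarith
  · have e0 : (2 * k + 1) % 2 = 1 := by omega
    have e0' : (2 * k + 1) / 2 = k := by omega
    have e1 : pV (2 * k + 1) = ((0, 1), k + 1) := by simp [pV, e0, e0']
    have e2 : qV (2 * k + 1) = ((1, 0), k) := by simp [qV, e0, e0']
    have e3 : lcN K (2 * k + 1) = - ((2 * k + 1).choose (k + 1) : K) := by simp [lcN, e0, e0']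
    have hmem : (k + 1, k) ∈ Finset.HasAntidiagonal.antidiagonal (2 * k + 1) := by simp; omega
    rw [detN_split, e1, e2, e3, ← Finset.add_sum_erase _ (fun ij : ℕ × ℕ => (2 * k + 1).choose ij.1 • (X ((0, 1), ij.1) * X ((1, 0), ij.2) : DiffPolyC K)) hmem, neg_smul, Nat.cast_smul_eq_nsmul]
    have : ∀ a b c : DiffPolyC K, b - (a + c) - (-a) = b - c := by intros; ring
    rw [this]
    refine sub_mem (sum_mem fun ij hij => VS_nsmul K _ (XX_VS K ?_ ?_)) (sum_mem fun ij hij => VS_nsmul K _ (XX_VS K ?_ ?_))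
    · simp at hij; simp [hij]
    · obtain ⟨i, j⟩ := ij
      simp only [Finset.HasAntidiagonal.mem_antidiagonal] at hij
      simp only [qwt, Prod.mk.injEq, zero_ne_one, one_ne_zero, and_false, false_and, if_false, and_self, if_true, Nat.add_sub_cancel]
      have h3 : i ≠ j := by omega
      zify at *
      rcases lt_or_gt_of_ne h3 with h4 | h4 <;> nlinarith
    · simp at hij; simp [hij.2]
    · obtain ⟨i, j⟩ := ij
      simp only [Finset.mem_erase, Finset.HasAntidiagonal.mem_antidiagonal, ne_eq, Prod.mk.injEq] at hij
      obtain ⟨h1, h2⟩ := hij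
      simp only [qwt, Prod.mk.injEq, zero_ne_one, one_ne_zero, and_false, false_and, if_false, and_self, if_true, Nat.add_sub_cancel]
      rcases i with _ | i
      · simp only [zero_add, zero_mul, mul_zero] at *
        subst h2
        nlinarith
      · simp only [Nat.add_sub_cancel]
        have h3 : i ≠ j := by omega
        zify at *
        have h5 : (k : ℤ) * 2 = i + j := by linarith
        rcases lt_or_gt_of_ne h3 with h4 | h4 <;> nlinarith

theorem pq_weight (n : ℕ) : (pV n).2 + (qV n).2 = n := by
  unfold pV qV; split_ifs <;> simp <;> omega

noncomputable def JN : Ideal (DiffPolyC K) := Ideal.span (Set.range (detN K))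

theorem regular_b0 [CharZero K] (f : DiffPolyC K) (hf : X ((0, 1), 0) * f ∈ JN K) : f ∈ JN K := by
  have hJ : JN K = Ideal.span (Set.range fun n => (lcN K n)⁻¹ • detN K n) := by
    apply le_antisymm
    · rw [JN, Ideal.span_le]
      rintro _ ⟨n, rfl⟩
      have : detN K n = C (lcN K n) * ((lcN K n)⁻¹ • detN K n) := by
        rw [← smul_eq_C_mul, smul_smul, mul_inv_cancel₀ (lcN_ne K n), one_smul]
      rw [SetLike.mem_coe, this]
      exact Ideal.mul_mem_left _ _ (Ideal.subset_span ⟨n, rfl⟩)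
    · rw [Ideal.span_le]
      rintro _ ⟨n, rfl⟩
      simp only [SetLike.mem_coe, smul_eq_C_mul]
      exact Ideal.mul_mem_left _ _ (Ideal.subset_span ⟨n, rfl⟩)
  rw [hJ] at hf ⊢
  refine regular_gen pV qV _ BW QW pV_inj qV_inj pV_ne_qV ?_
    (fun b => b.1 * (2 * (b.2 * (b.2 + 1)) + 1)) QW_bd _ ?_ ?_ f hf
  · intro n
    have h := Submodule.smul_mem _ (lcN K n)⁻¹ (detN_sub K n)
    rw [smul_sub, smul_smul, inv_mul_cancel₀ (lcN_ne K n), one_smul] at h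
    unfold GoodP
    rw [BW_two, QW_two, pq_weight]
    simpa [X, monomial_mul] using h
  · intro n; unfold pV; split_ifs <;> simp
  · intro n; unfold qV; split_ifs <;> simp
end part2
section part3
variable {K : Type} [Field K]

theorem iter_add {D : DiffPolyC K → DiffPolyC K} (hadd : ∀ f g, D (f + g) = D f + D g) (n : ℕ) (f g : DiffPolyC K) :
    D^[n] (f + g) = D^[n] f + D^[n] g := by
  induction n with
  | zero => rfl
  | succ n ih => rw [Function.iterate_succ_apply', ih, hadd, ← Function.iterate_succ_apply' D, ← Function.iterate_succ_apply' D]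

theorem iter_mul {D : DiffPolyC K → DiffPolyC K} (hadd : ∀ f g, D (f + g) = D f + D g)
    (hmul : ∀ f g, D (f * g) = D f * g + f * D g) (n : ℕ) (f g : DiffPolyC K) :
    D^[n] (f * g) = ∑ ij ∈ Finset.HasAntidiagonal.antidiagonal n, (n.choose ij.1) • (D^[ij.1] f * D^[ij.2] g) := by
  have hs : ∃ D' : DiffPolyC K →+ DiffPolyC K, ∀ f, D' f = D f := ⟨AddMonoidHom.mk' D hadd, fun _ => rfl⟩
  obtain ⟨D', hD'⟩ := hs
  induction n with
  | zero => simp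
  | succ n ih =>
    rw [Finset.sum_antidiagonal_choose_succ_nsmul (fun i j => D^[i] f * D^[j] g) n, Function.iterate_succ_apply', ih,
      ← hD', map_sum, ← Finset.sum_add_distrib]
    refine Finset.sum_congr rfl fun ij hij => ?_
    rw [map_nsmul, hD', hmul, smul_add, add_comm, ← Function.iterate_succ_apply' D, ← Function.iterate_succ_apply' D,
      Nat.choose_symm_of_eq_add (Finset.HasAntidiagonal.mem_antidiagonal.mp hij).symm]

theorem iter_X {D : DiffPolyC K → DiffPolyC K} (hX : ∀ v : DVar, D (X v) = X (v.1, v.2 + 1)) (n : ℕ) (c : Fin 2 × Fin 2) :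
    D^[n] (X (c, 0)) = X (c, n) := by
  induction n with
  | zero => rfl
  | succ n ih => rw [Function.iterate_succ_apply', ih, hX]

theorem iter_det {δ : K → K} {D : DiffPolyC K → DiffPolyC K} (hD : IsDiffStructure δ D) (n : ℕ) :
    D^[n] (detC K - 1) = detN K n - if n = 0 then 1 else 0 := by
  obtain ⟨-, -, hadd, hmul, -, hX⟩ := hD
  have hD0 : D 0 = 0 := by have := hadd 0 0; simpa using this
  have hD1 : D 1 = 0 := by have := hmul 1 1; simpa using this
  have h0 : ∀ n, D^[n] 0 = 0 := fun n => Function.iterate_fixed hD0 n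
  have hsub : ∀ (n : ℕ) f g, D^[n] (f - g) = D^[n] f - D^[n] g := by
    intro n f g
    rw [eq_sub_iff_add_eq, ← iter_add hadd, sub_add_cancel]
  have h1 : D^[n] 1 = if n = 0 then 1 else 0 := by
    rcases n with _ | n
    · rfl
    · rw [Function.iterate_succ_apply, hD1, h0]; simp
  rw [hsub, h1, detC, hsub, iter_mul hadd hmul, iter_mul hadd hmul, detN_split]
  simp only [iter_X hX]

variable {R : Type} [CommRing R] [Algebra K R]

noncomputable def evM (K : Type) [Field K] {R : Type} [CommRing R] [Algebra K R]
    (M : Matrix (Fin 2) (Fin 2) (PowerSeries R)) : DiffPolyC K →ₐ[K] R :=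
  aeval fun v => (v.2.factorial : R) * PowerSeries.coeff v.2 (M v.1.1 v.1.2)

theorem evM_X (M : Matrix (Fin 2) (Fin 2) (PowerSeries R)) (v : DVar) :
    evM K M (X v) = (v.2.factorial : R) * PowerSeries.coeff v.2 (M v.1.1 v.1.2) := by
  simp [evM]

theorem fac_mul {n : ℕ} {ij : ℕ × ℕ} (h : ij ∈ Finset.HasAntidiagonal.antidiagonal n) :
    ((n.choose ij.1 : ℕ) : R) * ij.1.factorial * ij.2.factorial = n.factorial := by
  have := Finset.HasAntidiagonal.mem_antidiagonal.mp h
  subst this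
  have h := Nat.add_choose_mul_factorial_mul_factorial ij.1 ij.2
  rw [← Nat.choose_symm_add] at h
  exact_mod_cast congrArg (Nat.cast : ℕ → R) h

theorem evM_detN (M : Matrix (Fin 2) (Fin 2) (PowerSeries R)) (n : ℕ) :
    evM K M (detN K n) = (n.factorial : R) * PowerSeries.coeff n M.det := by
  rw [detN, map_sum, Matrix.det_fin_two, map_sub, PowerSeries.coeff_mul, PowerSeries.coeff_mul, ← Finset.sum_sub_distrib, Finset.mul_sum]
  refine Finset.sum_congr rfl fun ij hij => ?_
  rw [← fac_mul hij]
  simp only [map_natCast, map_sub, map_mul, evM_X, nsmul_eq_mul]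
  ring

theorem evM_I {δ : K → K} {D : DiffPolyC K → DiffPolyC K} (hD : IsDiffStructure δ D)
    (M : Matrix (Fin 2) (Fin 2) (PowerSeries R)) (hM : M.det = 1) (f : DiffPolyC K)
    (hf : f ∈ Ideal.span {g : DiffPolyC K | ∃ i : ℕ, g = D^[i] (detC K - 1)}) : evM K M f = 0 := by
  suffices h : Ideal.span {g : DiffPolyC K | ∃ i : ℕ, g = D^[i] (detC K - 1)} ≤ RingHom.ker (evM K M) from h hf
  rw [Ideal.span_le]
  rintro _ ⟨n, rfl⟩
  rw [SetLike.mem_coe, RingHom.mem_ker, iter_det hD, map_sub, evM_detN, hM, PowerSeries.coeff_one]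
  split_ifs with h <;> simp [h]

theorem evM_delta (A B : Matrix (Fin 2) (Fin 2) (PowerSeries R)) (f : DiffPolyC K) :
    Algebra.TensorProduct.lift (evM K A) (evM K B) (fun _ _ => Commute.all _ _) (deltaC K f) = evM K (A * B) f := by
  suffices h : (Algebra.TensorProduct.lift (evM K A) (evM K B) (fun _ _ => Commute.all _ _)).comp (deltaC K) = evM K (A * B) from
    DFunLike.congr_fun h f
  refine MvPolynomial.algHom_ext fun v => ?_
  rw [AlgHom.comp_apply, evM_X, deltaC, aeval_X, map_sum, Matrix.mul_apply, map_sum, Finset.mul_sum]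
  refine Finset.sum_congr rfl fun k _ => ?_
  rw [PowerSeries.coeff_mul, map_sum, Finset.mul_sum, Finset.Nat.sum_antidiagonal_eq_sum_range_succ_mk]
  refine Finset.sum_congr rfl fun m hm => ?_
  have hm' : (m, v.2 - m) ∈ Finset.HasAntidiagonal.antidiagonal v.2 := by
    have := Finset.mem_range.mp hm
    simp; omega
  rw [← fac_mul hm', map_nsmul, Algebra.TensorProduct.lift_tmul, evM_X, evM_X, nsmul_eq_mul]
  ring

theorem evM_map {S : Type} [CommRing S] [Algebra K S] (φ : R →ₐ[K] S) 
    (M : Matrix (Fin 2) (Fin 2) (PowerSeries R)) (f : DiffPolyC K) :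
    evM K (M.map (PowerSeries.map (φ : R →+* S))) f = φ (evM K M f) := by
  suffices h : evM K (M.map (PowerSeries.map (φ : R →+* S))) = φ.comp (evM K M) from DFunLike.congr_fun h f
  refine MvPolynomial.algHom_ext fun v => ?_
  simp [evM_X]

theorem evM_smul (c : R) (M : Matrix (Fin 2) (Fin 2) (PowerSeries R)) {f : DiffPolyC K} {i : ℕ} (hf : f.IsHomogeneous i) :
    evM K (PowerSeries.C c • M) f = c ^ i * evM K M f := by
  have h : (evM K (PowerSeries.C c • M) f) = aeval (fun v => c * ((v.2.factorial : R) * PowerSeries.coeff v.2 (M v.1.1 v.1.2))) f := by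
    unfold evM
    congr 2
    ext v
    simp [PowerSeries.coeff_C_mul, mul_left_comm]
  rw [h, evM, aeval_def, aeval_def, eval₂_eq, eval₂_eq, Finset.mul_sum]
  refine Finset.sum_congr rfl fun m hm => ?_
  simp only [mul_pow, Finset.prod_mul_distrib]
  have h2 : ∏ x ∈ m.support, c ^ m x = c ^ i := by
    rw [Finset.prod_pow_eq_pow_sum]
    congr 1
    have := hf (mem_support_iff.mp hm)
    rw [← this, Finsupp.weight_apply, Finsupp.sum]
    simp
  rw [h2]; ring

end part3
section part4
variable {K : Type} [Field K]

noncomputable def SA (K : Type) [Field K] : Subalgebra K (DiffPolyC K) :=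
  Algebra.adjoin K {x | ∃ v : DVar, v.1 ≠ (1, 0) ∧ x = X v}

def PR (f : DiffPolyC K) : Prop := ∃ N : ℕ, ∃ g ∈ SA K, X ((0, 1), 0) ^ N * f - g ∈ JN K

theorem b0_SA : (X ((0, 1), 0) : DiffPolyC K) ∈ SA K := Algebra.subset_adjoin ⟨_, by simp, rfl⟩

theorem PR_SA {f : DiffPolyC K} (hf : f ∈ SA K) : PR f := ⟨0, f, hf, by simp⟩
theorem PR_J {f : DiffPolyC K} (hf : f ∈ JN K) : PR f := ⟨0, 0, zero_mem _, by simpa using hf⟩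

theorem PR.add {f g : DiffPolyC K} (hf : PR f) (hg : PR g) : PR (f + g) := by
  obtain ⟨N, f', hf', h1⟩ := hf
  obtain ⟨M, g', hg', h2⟩ := hg
  refine ⟨N + M, X ((0, 1), 0) ^ M * f' + X ((0, 1), 0) ^ N * g',
    add_mem (mul_mem (pow_mem b0_SA _) hf') (mul_mem (pow_mem b0_SA _) hg'), ?_⟩
  have := add_mem (Ideal.mul_mem_left _ (X ((0, 1), 0) ^ M) h1) (Ideal.mul_mem_left _ (X ((0, 1), 0) ^ N) h2)
  convert this using 1
  ring

theorem PR.mul {f g : DiffPolyC K} (hf : PR f) (hg : PR g) : PR (f * g) := by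
  obtain ⟨N, f', hf', h1⟩ := hf
  obtain ⟨M, g', hg', h2⟩ := hg
  refine ⟨N + M, f' * g', mul_mem hf' hg', ?_⟩
  have := add_mem (Ideal.mul_mem_left _ (X ((0, 1), 0) ^ M * g) h1) (Ideal.mul_mem_left _ f' h2)
  convert this using 1
  ring

theorem PR_sum {ι : Type} (s : Finset ι) (f : ι → DiffPolyC K) (h : ∀ i ∈ s, PR (f i)) : PR (∑ i ∈ s, f i) :=
  Finset.sum_induction f PR (fun _ _ => PR.add) (PR_SA (zero_mem _)) h

theorem PR_X {v : DVar} (hv : v.1 ≠ (1, 0)) : PR (X v : DiffPolyC K) :=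
  PR_SA (Algebra.subset_adjoin ⟨v, hv, rfl⟩)

theorem PR_nsmul {f : DiffPolyC K} (k : ℕ) (hf : PR f) : PR (k • f) := by
  rw [nsmul_eq_mul]
  exact (PR_SA (natCast_mem _ _)).mul hf

theorem PR_neg {f : DiffPolyC K} (hf : PR f) : PR (-f) := by
  rw [neg_eq_neg_one_mul]
  exact (PR_SA (neg_mem (one_mem _))).mul hf

theorem PR_c (n : ℕ) : PR (X ((1, 0), n) : DiffPolyC K) := by
  induction n using Nat.strong_induction_on with
  | _ n ih =>
    have hmem : (0, n) ∈ Finset.HasAntidiagonal.antidiagonal n := by simp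
    have h := detN_split K n
    rw [← Finset.add_sum_erase _ (fun ij : ℕ × ℕ => n.choose ij.1 • (X ((0, 1), ij.1) * X ((1, 0), ij.2) : DiffPolyC K)) hmem] at h
    simp only [Nat.choose_zero_right, one_smul] at h
    have h2 : PR (X ((0, 1), 0) * X ((1, 0), n) : DiffPolyC K) := by
      have e : ∀ {a b c d : DiffPolyC K}, d = a - (b + c) → b = a + -c + -d := by
        intros a b c d h; rw [h]; ring
      rw [e h]
      refine ((PR_sum _ _ fun ij _ => ?_).add (PR_neg (PR_sum _ _ fun ij hij => ?_))).add
        (PR_neg (PR_J (Ideal.subset_span ⟨n, rfl⟩)))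
      · exact PR_nsmul _ ((PR_X (by simp)).mul (PR_X (by simp)))
      · refine PR_nsmul _ ((PR_X (by simp)).mul (ih _ ?_))
        obtain ⟨i, j⟩ := ij
        simp only [Finset.mem_erase, Finset.HasAntidiagonal.mem_antidiagonal, ne_eq, Prod.mk.injEq] at hij
        show j < n
        omega
    obtain ⟨N, g, hg, h3⟩ := h2
    refine ⟨N + 1, g, hg, ?_⟩
    rwa [pow_succ, mul_assoc]

theorem PR_all (f : DiffPolyC K) : PR f := by
  induction f using MvPolynomial.induction_on with
  | C a => exact PR_SA (algebraMap_mem (SA K) a)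
  | add f g hf hg => exact hf.add hg
  | mul_X f v hf =>
    refine hf.mul ?_
    by_cases hv : v.1 = (1, 0)
    · obtain ⟨v1, n⟩ := v
      simp only at hv
      subst hv
      exact PR_c n
    · exact PR_X hv

theorem ker_le [CharZero K] {F : Type} [CommRing F] [Algebra K F] (φ i : DiffPolyC K →ₐ[K] F)
    (hi : Function.Injective i) (hφ : ∀ n, φ (detN K n) = 0) (h : ∀ v : DVar, v.1 ≠ (1, 0) → φ (X v) = i (X v))
    (f : DiffPolyC K) (hf : φ f = 0) : f ∈ JN K := by
  obtain ⟨N, g, hg, h1⟩ := PR_all f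
  have hJ : JN K ≤ RingHom.ker φ := by
    rw [JN, Ideal.span_le]
    rintro _ ⟨n, rfl⟩
    exact hφ n
  have h2 : φ g = i g := by
    have : SA K ≤ AlgHom.equalizer φ i := by
      refine Algebra.adjoin_le ?_
      rintro _ ⟨v, hv, rfl⟩
      exact h v hv
    exact this hg
  have h3 : φ (X ((0, 1), 0) ^ N * f - g) = 0 := hJ h1
  rw [map_sub, map_mul, hf, mul_zero, zero_sub, neg_eq_zero, h2] at h3
  have h4 : g = 0 := hi (by rw [h3, map_zero])
  rw [h4, sub_zero] at h1
  clear h3 hg h2 h4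
  induction N with
  | zero => simpa using h1
  | succ N ih =>
    apply ih
    apply regular_b0
    rwa [← mul_assoc, ← pow_succ']

theorem detN_hom (n : ℕ) : (detN K n).IsHomogeneous 2 := by
  refine IsHomogeneous.sum _ _ _ fun ij _ => ?_
  have h : ∀ v w : DVar, (X v * X w : DiffPolyC K).IsHomogeneous 2 := fun v w => (isHomogeneous_X K v).mul (isHomogeneous_X K w)
  have := (h ((0, 0), ij.1) ((1, 1), ij.2)).sub (h ((0, 1), ij.1) ((1, 0), ij.2))
  rw [← mem_homogeneousSubmodule] at this ⊢
  exact nsmul_mem this _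

theorem J_top {δ : K → K} {D : DiffPolyC K → DiffPolyC K} (hD : IsDiffStructure δ D) (d : ℕ) (f : DiffPolyC K)
    (hf : f ∈ JN K) : homogeneousComponent (d + 1) f ∈ restrictTotalDegree DVar K d ⊔
      (Ideal.span {g : DiffPolyC K | ∃ i : ℕ, g = D^[i] (detC K - 1)}).restrictScalars K := by
  obtain ⟨c, rfl⟩ := Finsupp.mem_ideal_span_range_iff_exists_finsupp.mp hf
  rw [Finsupp.sum, map_sum]
  refine sum_mem fun n _ => ?_
  rw [← sum_homogeneousComponent (c n), Finset.sum_mul, map_sum]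
  refine sum_mem fun i _ => ?_
  have hh : (homogeneousComponent i (c n) * detN K n) ∈ homogeneousSubmodule DVar K (i + 2) :=
    (homogeneousComponent_isHomogeneous i (c n)).mul (detN_hom n)
  rw [homogeneousComponent_of_mem hh]
  split_ifs with hi
  · have e : homogeneousComponent i (c n) * detN K n = homogeneousComponent i (c n) * (if n = 0 then 1 else 0) +
        homogeneousComponent i (c n) * D^[n] (detC K - 1) := by
      rw [iter_det hD]; ring
    rw [e]
    refine add_mem (Submodule.mem_sup_left ?_) (Submodule.mem_sup_right ?_)
    · split_ifs
      · rw [mul_one, mem_restrictTotalDegree]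
        exact ((homogeneousComponent_isHomogeneous i (c n)).totalDegree_le).trans (by omega)
      · simp
    · exact Ideal.mul_mem_left _ _ (Ideal.subset_span ⟨n, rfl⟩)
  · exact zero_mem _

end part4
section part5
variable {K : Type} [Field K]

theorem evM_scaled {O L : Type} [CommRing O] [Field L] [Algebra K O] [Algebra K L] (al : O →ₐ[K] L)
    (c : O) (hc : al c ≠ 0) (M : Matrix (Fin 2) (Fin 2) (PowerSeries O)) (d : ℕ) (f : DiffPolyC K)
    (hf : f.totalDegree ≤ d) :
    (al c) ^ d * evM K (PowerSeries.C (al c)⁻¹ • M.map (PowerSeries.map (al : O →+* L))) f =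
      al (∑ i ∈ Finset.range (d + 1), c ^ (d - i) * evM K M (homogeneousComponent i f)) := by
  have hs : f = ∑ i ∈ Finset.range (d + 1), homogeneousComponent i f := by
    conv_lhs => rw [← sum_homogeneousComponent f]
    refine Finset.sum_subset (by intro i; simp; omega) fun i _ hi => ?_
    apply homogeneousComponent_eq_zero
    simp at hi; omega
  conv_lhs => rw [hs]
  rw [map_sum, map_sum, Finset.mul_sum]
  refine Finset.sum_congr rfl fun i hi => ?_
  rw [evM_smul _ _ (homogeneousComponent_isHomogeneous i f), evM_map, map_mul, map_pow]
  have : al c ^ d = al c ^ (d - i) * al c ^ i := by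
    rw [← pow_add]; congr 1; simp at hi; omega
  rw [this, inv_pow]
  field_simp

theorem core {O L F : Type} [CommRing O] [Field L] [Algebra K O] [Algebra K L] [CommRing F] [Algebra K F]
    {δ : K → K} {D : DiffPolyC K → DiffPolyC K} (hD : IsDiffStructure δ D) (al : O →ₐ[K] L)
    (hal : Function.Injective al) (e0 : O →ₐ[K] F) (ε : O) (hε : al ε ≠ 0) (he : e0 ε = 0)
    (A B : Matrix (Fin 2) (Fin 2) (PowerSeries O)) (hA : A.det = PowerSeries.C (ε ^ 2)) (hB : B.det = PowerSeries.C (ε ^ 2))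
    (d : ℕ) (f : DiffPolyC K)
    (hf : f ∈ restrictTotalDegree DVar K (d + 1))
    (hΔ : deltaC K f ∈
      tensorSub (restrictTotalDegree DVar K (d + 1)) (restrictTotalDegree DVar K d) ⊔
      tensorSub (restrictTotalDegree DVar K d) (restrictTotalDegree DVar K (d + 1)) ⊔
      tensorSub ((Ideal.span {g : DiffPolyC K | ∃ i : ℕ, g = D^[i] (detC K - 1)}).restrictScalars K) ⊤ ⊔
      tensorSub ⊤ ((Ideal.span {g : DiffPolyC K | ∃ i : ℕ, g = D^[i] (detC K - 1)}).restrictScalars K)) :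
    evM K ((A * B).map (PowerSeries.map (e0 : O →+* F))) (homogeneousComponent (d + 1) f) = 0 := by
  set A' := PowerSeries.C (al ε)⁻¹ • A.map (PowerSeries.map (al : O →+* L)) with hA'
  set B' := PowerSeries.C (al ε)⁻¹ • B.map (PowerSeries.map (al : O →+* L)) with hB'
  have hdet : ∀ M : Matrix (Fin 2) (Fin 2) (PowerSeries O), M.det = PowerSeries.C (ε ^ 2) →
      (PowerSeries.C (al ε)⁻¹ • M.map (PowerSeries.map (al : O →+* L))).det = 1 := by
    intro M hM
    rw [Matrix.det_smul, Fintype.card_fin]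
    have : (M.map (PowerSeries.map (al : O →+* L))).det = PowerSeries.map (al : O →+* L) M.det := by
      rw [RingHom.map_det]; rfl
    rw [this, hM, PowerSeries.map_C, ← map_pow, ← map_mul]
    have : (al ε)⁻¹ ^ 2 * (al : O →+* L) (ε ^ 2) = 1 := by
      simp only [RingHom.coe_coe, map_pow]; field_simp
    rw [this, map_one]
  set Θ := Algebra.TensorProduct.lift (evM K A') (evM K B') (fun _ _ => Commute.all _ _) with hΘ
  let Z : Submodule K L :=
    { carrier := {x | ∃ g : O, al ε ^ (2 * (d + 1)) * x = al (ε * g)}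
      add_mem' := by
        rintro x y ⟨g, hg⟩ ⟨h, hh⟩
        exact ⟨g + h, by rw [mul_add, hg, hh, mul_add, map_add]⟩
      zero_mem' := ⟨0, by simp⟩
      smul_mem' := by
        rintro c x ⟨g, hg⟩
        exact ⟨c • g, by rw [mul_smul_comm, hg, mul_smul_comm, map_smul]⟩ }
  have hsc : ∀ (M : Matrix (Fin 2) (Fin 2) (PowerSeries O)) (k : ℕ) (a : DiffPolyC K), a ∈ restrictTotalDegree DVar K k →
      ∃ g : O, al ε ^ k * evM K (PowerSeries.C (al ε)⁻¹ • M.map (PowerSeries.map (al : O →+* L))) a = al g := by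
    intro M k a ha
    exact ⟨_, evM_scaled al ε hε M k a ((mem_restrictTotalDegree _ _ _).mp ha)⟩
  have hZ : Θ (deltaC K f) ∈ Z := by
    suffices h : ∀ z ∈ _, z ∈ Z.comap Θ.toLinearMap from h _ hΔ
    rw [← SetLike.le_def]
    refine sup_le (sup_le (sup_le ?_ ?_) ?_) ?_ <;>
    · rw [tensorSub, Submodule.span_le]
      rintro _ ⟨a, ha, b, hb, rfl⟩
      simp only [SetLike.mem_coe, Submodule.mem_comap, AlgHom.toLinearMap_apply, hΘ, Algebra.TensorProduct.lift_tmul]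
      first
      | (have h0 := evM_I hD A' (hdet A hA) a ha
         rw [h0, zero_mul]; exact zero_mem _)
      | (have h0 := evM_I hD B' (hdet B hB) b hb
         rw [h0, mul_zero]; exact zero_mem _)
      | (obtain ⟨g, hg⟩ := hsc A _ a ha
         obtain ⟨h, hh⟩ := hsc B _ b hb
         refine ⟨g * h, ?_⟩
         rw [map_mul, map_mul, ← hg, ← hh]
         ring)
  rw [hΘ, evM_delta] at hZ
  obtain ⟨g, hg⟩ := hZ
  have hAB : A' * B' = PowerSeries.C (al (ε ^ 2))⁻¹ • (A * B).map (PowerSeries.map (al : O →+* L)) := by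
    rw [hA', hB', Matrix.smul_mul, Matrix.mul_smul, smul_smul, ← map_mul, Matrix.map_mul]
    have h2 : (al ε)⁻¹ * (al ε)⁻¹ = (al (ε ^ 2))⁻¹ := by rw [map_pow, sq, mul_inv]
    rw [h2]
  rw [hAB, pow_mul, ← map_pow, evM_scaled al (ε ^ 2) (by rw [map_pow]; exact pow_ne_zero _ hε) (A * B) (d + 1) f
    ((mem_restrictTotalDegree _ _ _).mp hf)] at hg
  have h1 := congrArg e0 (hal hg)
  rw [map_mul, he, zero_mul, map_sum, Finset.sum_range_succ, Finset.sum_eq_zero] at h1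
  · rw [evM_map]
    simpa using h1
  · intro i hi
    rw [map_mul, map_pow, map_pow, he, ← pow_mul, zero_pow, zero_mul]
    simp at hi; omega

open Polynomial in
theorem top_mem [CharZero K]
    {δ : K → K} {D : DiffPolyC K → DiffPolyC K} (hD : IsDiffStructure δ D)
    (d : ℕ) (f : DiffPolyC K)
    (hf : f ∈ restrictTotalDegree DVar K (d + 1))
    (hΔ : deltaC K f ∈
      tensorSub (restrictTotalDegree DVar K (d + 1)) (restrictTotalDegree DVar K d) ⊔
      tensorSub (restrictTotalDegree DVar K d) (restrictTotalDegree DVar K (d + 1)) ⊔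
      tensorSub ((Ideal.span {g : DiffPolyC K | ∃ i : ℕ, g = D^[i] (detC K - 1)}).restrictScalars K) ⊤ ⊔
      tensorSub ⊤ ((Ideal.span {g : DiffPolyC K | ∃ i : ℕ, g = D^[i] (detC K - 1)}).restrictScalars K)) :
    homogeneousComponent (d + 1) f ∈ JN K := by
  let F := FractionRing (DiffPolyC K)
  let i : DiffPolyC K →ₐ[K] F := IsScalarTower.toAlgHom K (DiffPolyC K) F
  have hi : Function.Injective i := IsFractionRing.injective (DiffPolyC K) F
  have hchar : CharZero F := charZero_of_injective_algebraMap (algebraMap K F).injective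
  let s : Fin 2 × Fin 2 → PowerSeries F := fun c => PowerSeries.mk fun n => ((n.factorial : F))⁻¹ * i (MvPolynomial.X (c, n))
  have hs : ∀ c n, ((n.factorial : F)) * PowerSeries.coeff n (s c) = i (MvPolynomial.X (c, n)) := by
    intro c n
    have : (n.factorial : F) ≠ 0 := by exact_mod_cast n.factorial_ne_zero
    simp only [s, PowerSeries.coeff_mk]
    exact mul_inv_cancel_left₀ this _
  have hb : PowerSeries.constantCoeff (s (0, 1)) ≠ 0 := by
    rw [← PowerSeries.coeff_zero_eq_constantCoeff_apply]
    have := hs (0, 1) 0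
    simp only [Nat.factorial_zero, Nat.cast_one, one_mul] at this
    rw [this, map_ne_zero_iff i hi]
    exact X_ne_zero _
  have hbi : s (0, 1) * (s (0, 1))⁻¹ = 1 := PowerSeries.mul_inv_cancel _ hb
  set a := s (0, 0)
  set b := s (0, 1)
  set dd := s (1, 1)
  let m : PowerSeries F →+* PowerSeries F[X] := PowerSeries.map Polynomial.C
  have hmb : m b * m b⁻¹ = 1 := by rw [← map_mul, hbi, map_one]
  let ε2 : PowerSeries F[X] := PowerSeries.C ((Polynomial.X : F[X]) ^ 2)
  let A : Matrix (Fin 2) (Fin 2) (PowerSeries F[X]) := !![1, 0; m (dd * b⁻¹), ε2]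
  let B : Matrix (Fin 2) (Fin 2) (PowerSeries F[X]) := !![m a, m b; - ε2 * m b⁻¹, 0]
  let e0 : F[X] →ₐ[K] F := (Polynomial.aeval (0 : F)).restrictScalars K
  have he : e0 (Polynomial.X) = 0 := by simp [e0]
  have hm : ∀ x, PowerSeries.map (e0 : F[X] →+* F) (m x) = x := by
    intro x
    ext n
    simp [m, e0]
  have hε2 : PowerSeries.map (e0 : F[X] →+* F) ε2 = 0 := by
    simp [ε2, e0]
  have hA : A.det = PowerSeries.C ((Polynomial.X : F[X]) ^ 2) := by
    simp [A, Matrix.det_fin_two_of, ε2]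
  have hB : B.det = PowerSeries.C ((Polynomial.X : F[X]) ^ 2) := by
    simp only [B, Matrix.det_fin_two_of]
    linear_combination ε2 * hmb
  have hc := core (F := F) (O := F[X]) (L := FractionRing F[X]) hD
    (IsScalarTower.toAlgHom K F[X] (FractionRing F[X])) (IsFractionRing.injective F[X] (FractionRing F[X]))
    e0 Polynomial.X (by
      exact (map_ne_zero_iff _ (IsFractionRing.injective F[X] (FractionRing F[X]))).mpr Polynomial.X_ne_zero) he A B hA hB d f hf hΔ
  set M0 := (A * B).map (PowerSeries.map (e0 : F[X] →+* F)) with hM0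
  have hM : M0 = !![a, b; dd * b⁻¹ * a, dd] := by
    have hd : dd * b⁻¹ * b = dd := by rw [mul_assoc, mul_comm b⁻¹, hbi, mul_one]
    rw [hM0]
    ext1 x y
    fin_cases x <;> fin_cases y
    · simp [A, B, Matrix.mul_apply, Fin.sum_univ_two, hm, -map_mul]
    · simp [A, B, Matrix.mul_apply, Fin.sum_univ_two, hm, -map_mul]
    · simp [A, B, Matrix.mul_apply, Fin.sum_univ_two, -map_mul]
      simp only [map_mul, hm, hε2, zero_mul, add_zero]
    · simp [A, B, Matrix.mul_apply, Fin.sum_univ_two, -map_mul]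
      rw [map_mul, hm, hm, hd]
  refine ker_le (evM K M0) i hi ?_ ?_ _ hc
  · intro n
    rw [evM_detN, hM, Matrix.det_fin_two_of]
    have : a * dd - b * (dd * b⁻¹ * a) = 0 := by linear_combination (-a * dd) * hbi
    rw [this]; simp
  · rintro ⟨⟨x, y⟩, n⟩ hv
    rw [evM_X, hM]
    fin_cases x <;> fin_cases y
    · exact hs (0, 0) n
    · exact hs (0, 1) n
    · exact absurd rfl hv
    · exact hs (1, 1) n

end part5

/-- If `f ∈ C_{≤d}` and `Δ_C(f)` lies in
`C_{≤d} ⊗ C_{≤d−1} + C_{≤d−1} ⊗ C_{≤d} + [det−1] ⊗ C + C ⊗ [det−1]`,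
then `f ∈ C_{≤d−1} + [det−1]`. -/
theorem mem_le_degree_add_detIdeal {K : Type} [Field K] [CharZero K]
    (δ : K → K) (D : DiffPolyC K → DiffPolyC K)
    (hD : IsDiffStructure δ D)
    (d : ℕ) (f : DiffPolyC K)
    (hf : f ∈ restrictTotalDegree DVar K d)
    (hΔ : deltaC K f ∈
      tensorSub (restrictTotalDegree DVar K d) (restrictTotalDegree DVar K (d - 1)) ⊔
      tensorSub (restrictTotalDegree DVar K (d - 1)) (restrictTotalDegree DVar K d) ⊔
      tensorSub ((Ideal.span {g : DiffPolyC K | ∃ i : ℕ, g = D^[i] (detC K - 1)}).restrictScalars K) ⊤ ⊔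
      tensorSub ⊤ ((Ideal.span {g : DiffPolyC K | ∃ i : ℕ, g = D^[i] (detC K - 1)}).restrictScalars K)) :
    f ∈ restrictTotalDegree DVar K (d - 1) ⊔
      (Ideal.span {g : DiffPolyC K | ∃ i : ℕ, g = D^[i] (detC K - 1)}).restrictScalars K := by
  rcases d with _ | d
  · exact Submodule.mem_sup_left hf
  · rw [Nat.add_sub_cancel] at hΔ ⊢
    have h1 := J_top hD d _ (top_mem hD d f hf hΔ)
    rw [homogeneousComponent_of_mem (homogeneousComponent_isHomogeneous _ _), if_pos rfl] at h1
    have h2 : f - homogeneousComponent (d + 1) f ∈ restrictTotalDegree DVar K d := by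
      rw [mem_restrictTotalDegree] at hf
      have hs : f = ∑ i ∈ Finset.range (d + 1 + 1), homogeneousComponent i f := by
        conv_lhs => rw [← sum_homogeneousComponent f]
        refine Finset.sum_subset (by intro i; simp; omega) fun i _ hi => ?_
        apply homogeneousComponent_eq_zero
        simp at hi; omega
      rw [Finset.sum_range_succ] at hs
      have hs2 : f - homogeneousComponent (d + 1) f =
          ∑ i ∈ Finset.range (d + 1), homogeneousComponent i f := sub_eq_of_eq_add hs
      rw [hs2]
      refine sum_mem fun i hi => ?_
      rw [mem_restrictTotalDegree]
      have := Finset.mem_range.mp hi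
      exact (homogeneousComponent_isHomogeneous i f).totalDegree_le.trans (by omega)
    have := add_mem (Submodule.mem_sup_left h2) h1
    rwa [sub_add_cancel] at this
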